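/- For a quadratic irrational η and reals 0 < a < b < 1, the set of primes p with a < {ηp} < b has relative density b − a among the primes; that is, (1/π(N)) · #{p ≤ N : p prime, a < frac(ηp) < b} → b − a as N → ∞. -/

import Mathlib

open Filter

/-- η is a quadratic irrational: irrational root of an integer quadratic. -/
def IsQuadraticIrrational (η : ℝ) : Prop :=
  Irrational η ∧ ∃ A B C : ℤ, A ≠ 0 ∧ (A : ℝ) * η ^ 2 + B * η + C = 0

noncomputable def ee (x : ℝ) : ℂ := Complex.exp (Complex.I * ((2 * Real.pi * x : ℝ) : ℂ))

noncomputable def nd (x : ℝ) : ℝ := |x - round x|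

lemma ee_add (x y : ℝ) : ee (x + y) = ee x * ee y := by
  unfold ee
  rw [← Complex.exp_add]
  congr 1
  push_cast
  ring

lemma norm_ee (x : ℝ) : ‖ee x‖ = 1 := by
  unfold ee
  rw [mul_comm]
  exact Complex.norm_exp_ofReal_mul_I _

lemma ee_mul_nat (x : ℝ) (n : ℕ) : ee (x * n) = ee x ^ n := by
  unfold ee
  rw [← Complex.exp_nat_mul]
  congr 1
  push_cast
  ring

lemma ee_int (n : ℤ) : ee n = 1 := by
  unfold ee
  rw [Complex.exp_eq_one_iff]
  exact ⟨n, by push_cast; ring⟩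

lemma conj_ee (x : ℝ) : (starRingEnd ℂ) (ee x) = ee (-x) := by
  unfold ee
  rw [← Complex.exp_conj, map_mul, Complex.conj_ofReal, Complex.conj_I]
  congr 1
  push_cast
  ring

lemma nd_nonneg (x : ℝ) : 0 ≤ nd x := abs_nonneg _

lemma nd_le_abs_sub (x : ℝ) (z : ℤ) : nd x ≤ |x - z| := round_le x z

lemma nd_neg (x : ℝ) : nd (-x) = nd x := by
  have h : ∀ y : ℝ, nd (-y) ≤ nd y := by
    intro y
    have := nd_le_abs_sub (-y) (-round y)
    refine this.trans (le_of_eq ?_)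
    unfold nd
    rw [← abs_neg]
    congr 1
    push_cast
    ring
  refine le_antisymm (h x) ?_
  have := h (-x)
  rwa [neg_neg] at this

lemma four_nd_le (x : ℝ) : 4 * nd x ≤ ‖ee x - 1‖ := by
  have h1 : ee x = ee (x - round x) := by
    have := ee_add (x - round x) (round x)
    rw [ee_int, mul_one, sub_add_cancel] at this
    exact this
  rw [h1]
  unfold ee nd
  rw [Complex.norm_exp_I_mul_ofReal_sub_one]
  set r := x - round x with hr
  have hr2 : |r| ≤ 1 / 2 := abs_sub_round x
  have : 2 * Real.pi * r / 2 = Real.pi * r := by ring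
  rw [this, norm_mul, Real.norm_eq_abs, Real.norm_eq_abs]
  have hpi := Real.pi_pos
  have h2 := Real.mul_abs_le_abs_sin (x := Real.pi * r) (by
    rw [abs_mul, abs_of_pos hpi]; nlinarith)
  rw [abs_mul, abs_of_pos hpi] at h2
  have h3 : 2 / Real.pi * (Real.pi * |r|) = 2 * |r| := by field_simp
  rw [h3] at h2
  rw [abs_of_pos (by norm_num : (0 : ℝ) < 2)]
  linarith

lemma geom_bound (x : ℝ) (hx : 0 < nd x) (n : ℕ) :
    ‖∑ m ∈ Finset.range n, ee (x * m)‖ ≤ 1 / (2 * nd x) := by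
  have h4 := four_nd_le x
  have hne : ee x ≠ 1 := by
    intro h
    rw [h, sub_self, norm_zero] at h4
    linarith
  simp_rw [ee_mul_nat]
  rw [geom_sum_eq hne, norm_div]
  have h5 : ‖ee x ^ n - 1‖ ≤ 2 := by
    refine (norm_sub_le _ _).trans ?_
    rw [norm_pow, norm_ee, one_pow, norm_one]
    norm_num
  calc _ ≤ 2 / (4 * nd x) := by gcongr
    _ = _ := by field_simp; norm_num

lemma parts_bound (x : ℝ) (hx : 0 < nd x) (f : ℕ → ℝ) (hf : Monotone f) (h0 : 0 ≤ f 0) (n : ℕ) :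
    ‖∑ m ∈ Finset.range (n + 1), (f m : ℂ) * ee (x * m)‖ ≤ f n / nd x := by
  have := Finset.sum_range_by_parts (fun m => (f m : ℂ)) (fun m => ee (x * m)) (n + 1)
  simp only [smul_eq_mul] at this
  rw [this, Nat.add_sub_cancel]
  have hfn : ∀ n, 0 ≤ f n := fun n => h0.trans (hf (Nat.zero_le n))
  calc _ ≤ f n * (1 / (2 * nd x)) + ∑ i ∈ Finset.range n, (f (i + 1) - f i) * (1 / (2 * nd x)) := by
        refine (norm_sub_le _ _).trans ?_
        gcongr ?_ + ?_
        · rw [norm_mul, Complex.norm_real, Real.norm_eq_abs, abs_of_nonneg (hfn n)]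
          exact mul_le_mul_of_nonneg_left (geom_bound x hx _) (hfn n)
        · refine norm_sum_le_of_le _ fun i _ => ?_
          have h1 : 0 ≤ f (i + 1) - f i := sub_nonneg.2 (hf (Nat.le_succ i))
          rw [norm_mul, ← Complex.ofReal_sub, Complex.norm_real, Real.norm_eq_abs, abs_of_nonneg h1]
          exact mul_le_mul_of_nonneg_left (geom_bound x hx _) h1
    _ = (2 * f n - f 0) * (1 / (2 * nd x)) := by
        rw [← Finset.sum_mul, Finset.sum_range_sub]; ring
    _ ≤ (2 * f n) * (1 / (2 * nd x)) := by gcongr; linarith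
    _ = _ := by field_simp

/-- badly approximable with constant `c`. -/
def Bad (c α : ℝ) : Prop := ∀ k : ℕ, 0 < k → c / k ≤ nd (α * k)

lemma bad_of_quad (η : ℝ) (h1 : Irrational η) (A B C : ℤ) (hA : A ≠ 0)
    (h : (A : ℝ) * η ^ 2 + B * η + C = 0) : ∃ c : ℝ, 0 < c ∧ Bad c η := by
  obtain ⟨M, hM, hb⟩ := Liouville.exists_pos_real_of_irrational_root h1
    (f := Polynomial.C A * Polynomial.X ^ 2 + Polynomial.C B * Polynomial.X + Polynomial.C C)
    (by
      intro h0
      have := Polynomial.natDegree_quadratic (b := B) (c := C) hA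
      rw [h0] at this
      simp at this) (by simpa using h)
  rw [Polynomial.natDegree_quadratic hA] at hb
  refine ⟨1 / M, by positivity, ?_⟩
  intro k hk
  obtain ⟨j, rfl⟩ : ∃ j, k = j + 1 := ⟨k - 1, by omega⟩
  have := hb (round (η * ((j + 1 : ℕ) : ℝ))) j
  unfold nd
  set z := round (η * ((j + 1 : ℕ) : ℝ))
  have hj : (0 : ℝ) < (j : ℝ) + 1 := by positivity
  have e : η * ((j + 1 : ℕ) : ℝ) - z = (η - z / (j + 1)) * (j + 1) := by
    push_cast; field_simp
  rw [e, abs_mul, abs_of_pos hj]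
  push_cast
  rw [div_div, div_le_iff₀ (by positivity)]
  nlinarith

lemma count_bound (c α : ℝ) (hc : 0 < c) (hα : Bad c α) (β y : ℝ) (H : ℕ) (hH : 0 < H) (hy : 0 ≤ y) :
    (((Finset.Ioc 0 H).filter fun n : ℕ => nd (β - α * n) < y).card : ℝ) ≤ 2 * (y * H / c) + 2 := by
  set s := (Finset.Ioc 0 H).filter fun n : ℕ => nd (β - α * n) < y with hs
  let r : ℕ → ℝ := fun n => (β - α * n) - round (β - α * n)
  let φ : ℕ → ℤ := fun n => ⌊r n * H / c⌋
  have hH' : (0 : ℝ) < H := by exact_mod_cast hH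
  have sep : ∀ m n : ℕ, m ∈ Finset.Ioc 0 H → n ∈ Finset.Ioc 0 H → m < n → φ m ≠ φ n := by
    intro m n hm hn hmn he
    rw [Finset.mem_Ioc] at hm hn
    have h1 := Int.abs_sub_lt_one_of_floor_eq_floor he
    have h2 := hα (n - m) (by omega)
    have h3 := nd_le_abs_sub (α * ((n - m : ℕ) : ℝ)) (round (β - α * m) - round (β - α * n))
    have h4 : α * ((n - m : ℕ) : ℝ) - ((round (β - α * m) - round (β - α * n) : ℤ) : ℝ)
        = r m - r n := by
      simp only [r]
      rw [Nat.cast_sub hmn.le]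
      push_cast
      ring
    rw [h4] at h3
    have h5 : c / H ≤ c / ((n - m : ℕ) : ℝ) := by
      apply div_le_div_of_nonneg_left hc.le
      · exact_mod_cast (by omega : 0 < n - m)
      · exact_mod_cast (by omega : n - m ≤ H)
    have h6 : c / H ≤ |r m - r n| := h5.trans (h2.trans h3)
    have h7 : r m * H / c - r n * H / c = (r m - r n) * (H / c) := by ring
    rw [h7, abs_mul, abs_of_pos (by positivity : 0 < (H : ℝ) / c)] at h1
    have h8 : c / H * (H / c) ≤ |r m - r n| * (H / c) := by gcongr
    have h9 : c / H * (H / c) = 1 := by field_simp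
    linarith
  have hinj : Set.InjOn φ s := by
    intro m hm n hn he
    have hm := (Finset.mem_filter.1 hm).1
    have hn := (Finset.mem_filter.1 hn).1
    rcases lt_trichotomy m n with h | h | h
    · exact absurd he (sep m n hm hn h)
    · exact h
    · exact absurd he.symm (sep n m hn hm h)
  have hmaps : Set.MapsTo φ s (Finset.Icc ⌊-(y * H / c)⌋ ⌊y * H / c⌋ : Finset ℤ) := by
    intro n hn
    have hn := (Finset.mem_filter.1 hn).2
    have : |r n| < y := hn
    rw [abs_lt] at this
    rw [Finset.coe_Icc]
    constructor
    · apply Int.floor_le_floor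
      rw [← neg_div, ← neg_mul]
      gcongr
      exact this.1.le
    · apply Int.floor_le_floor
      gcongr
      exact this.2.le
  have hcard := Finset.card_le_card_of_injOn φ hmaps hinj
  have hyc : 0 ≤ y * H / c := by positivity
  have h1 : ((s.card : ℤ) : ℝ) ≤ ((⌊y * H / c⌋ + 1 - ⌊-(y * H / c)⌋ : ℤ) : ℝ) := by
    rw [Int.card_Icc] at hcard
    have : (s.card : ℤ) ≤ ⌊y * H / c⌋ + 1 - ⌊-(y * H / c)⌋ := by
      have : ⌊-(y * H / c)⌋ ≤ ⌊y * H / c⌋ := Int.floor_le_floor (by linarith)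
      omega
    exact_mod_cast this
  push_cast at h1
  have h2 := Int.floor_le (y * H / c)
  have h3 := Int.lt_floor_add_one (-(y * H / c))
  linarith


open Finset in
lemma twist_conv (f g : ArithmeticFunction ℝ) (N : ℕ) (h : ℕ → ℂ) :
    ∑ n ∈ Finset.Ioc 0 N, ((f * g) n : ℂ) * h n =
      ∑ d ∈ Finset.Ioc 0 N, ∑ m ∈ Finset.Ioc 0 N,
        if d * m ≤ N then (f d : ℂ) * (g m : ℂ) * h (d * m) else 0 := by
  trans ∑ n ∈ Ioc 0 N, ∑ x ∈ Ioc 0 N ×ˢ Ioc 0 N with x.1 * x.2 = n,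
      (f x.1 : ℂ) * (g x.2 : ℂ) * h (x.1 * x.2)
  · refine sum_congr rfl fun n hn ↦ ?_
    simp only [mem_Ioc] at hn
    rw [ArithmeticFunction.mul_apply, Nat.divisorsAntidiagonal_eq_prod_filter_of_le hn.1.ne' hn.2]
    push_cast
    rw [Finset.sum_mul]
    refine sum_congr rfl fun x hx ↦ ?_
    rw [(mem_filter.1 hx).2]
  · simp_rw [sum_filter]
    rw [sum_comm, sum_product]
    refine sum_congr rfl fun d hd ↦ sum_congr rfl fun m hm ↦ ?_
    rw [mem_Ioc] at hd hm
    rw [sum_ite_eq]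
    have : 0 < d * m := Nat.mul_pos hd.1 hm.1
    simp [this, Nat.pos_iff_ne_zero.1 hd.1, Nat.pos_iff_ne_zero.1 hm.1]

open Finset in
lemma sum_if_mul (N d : ℕ) (hd : 0 < d) (F : ℕ → ℂ) :
    ∑ m ∈ Finset.Ioc 0 N, (if d * m ≤ N then F m else 0) = ∑ m ∈ Finset.Ioc 0 (N / d), F m := by
  rw [← sum_filter]
  apply sum_congr _ fun _ _ => rfl
  ext m
  simp only [mem_filter, mem_Ioc]
  rw [Nat.le_div_iff_mul_le hd, mul_comm d m]
  have : m ≤ m * d := Nat.le_mul_of_pos_right m hd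
  constructor
  · rintro ⟨⟨h1, h2⟩, h3⟩; exact ⟨h1, h3⟩
  · rintro ⟨h1, h3⟩; exact ⟨⟨h1, by omega⟩, h3⟩

lemma sum_Ioc_range (M : ℕ) (F : ℕ → ℂ) (h0 : F 0 = 0) :
    ∑ m ∈ Finset.Ioc 0 M, F m = ∑ m ∈ Finset.range (M + 1), F m := by
  rw [Finset.sum_range_succ', h0, add_zero]
  rw [Finset.range_eq_Ico, Finset.sum_Ico_add' (fun m => F m) 0 M 1]
  apply Finset.sum_congr _ fun _ _ => rfl
  ext m
  simp only [Finset.mem_Ioc, Finset.mem_Ico]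
  omega

lemma bad_pos {c α : ℝ} (hc : 0 < c) (hα : Bad c α) {k : ℕ} (hk : 0 < k) : 0 < nd (α * k) := by
  have : (0 : ℝ) < k := by exact_mod_cast hk
  exact (div_pos hc this).trans_le (hα k hk)

lemma typeI (c α : ℝ) (hc : 0 < c) (hα : Bad c α) (f g : ArithmeticFunction ℝ) (N K : ℕ)
    (A G : ℝ) (hA : 0 ≤ A) (hG : 0 ≤ G) (hf : ∀ k ≤ N, |f k| ≤ A) (hfK : ∀ k, K < k → f k = 0)
    (hg : Monotone g) (hgG : ∀ m ≤ N, g m ≤ G) :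
    ‖∑ n ∈ Finset.Ioc 0 N, ((f * g) n : ℂ) * ee (α * n)‖ ≤ (K : ℝ) ^ 2 * A * G / c := by
  rw [twist_conv f g N (fun n => ee (α * n))]
  have h1 : ∀ d ∈ Finset.Ioc 0 N, ‖∑ m ∈ Finset.Ioc 0 N,
        (if d * m ≤ N then (f d : ℂ) * (g m : ℂ) * ee (α * (d * m : ℕ)) else 0)‖ ≤
        if d ≤ K then K * A * G / c else 0 := by
    intro d hd
    rw [Finset.mem_Ioc] at hd
    have hd0 : (0 : ℝ) < d := by exact_mod_cast hd.1
    split_ifs with hdK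
    · rw [sum_if_mul N d hd.1]
      have hnd := bad_pos hc hα hd.1
      have e : ∀ m : ℕ, (f d : ℂ) * (g m : ℂ) * ee (α * (d * m : ℕ)) =
          (f d : ℂ) * ((g m : ℂ) * ee (α * d * m)) := by
        intro m; push_cast; rw [mul_assoc, mul_assoc]
      simp_rw [e]
      rw [← Finset.mul_sum, sum_Ioc_range _ _ (by simp), norm_mul, Complex.norm_real,
        Real.norm_eq_abs]
      have h2 := parts_bound (α * d) hnd g hg (by simp) (N / d)
      have h3 : g (N / d) / nd (α * d) ≤ G / (c / d) := by
        have := hα d hd.1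
        have h4 := hgG (N / d) (Nat.div_le_self _ _)
        gcongr
      calc _ ≤ A * (G / (c / d)) := by
            gcongr
            · exact hf d hd.2
            · exact h2.trans h3
        _ = d * A * G / c := by field_simp
        _ ≤ _ := by gcongr
    · rw [hfK d (by omega)]
      simp
  calc _ ≤ ∑ d ∈ Finset.Ioc 0 N, (if d ≤ K then K * A * G / c else 0) := norm_sum_le_of_le _ h1
    _ = ((Finset.Ioc 0 N).filter (fun d => d ≤ K)).card * (K * A * G / c) := by
        rw [← Finset.sum_filter, Finset.sum_const, nsmul_eq_mul]
    _ ≤ K * (K * A * G / c) := by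
        gcongr
        calc _ ≤ (Finset.Ioc 0 K).card := by
              apply Finset.card_le_card
              intro d
              simp only [Finset.mem_filter, Finset.mem_Ioc]
              omega
          _ = K := by simp
    _ = _ := by ring

lemma sum_inv_le (N : ℕ) : ∑ m ∈ Finset.Ioc 0 N, (1 : ℝ) / m ≤ 1 + Real.log N := by
  have := harmonic_le_one_add_log N
  rw [harmonic_eq_sum_Icc] at this
  push_cast at this
  have e : Finset.Ioc 0 N = Finset.Icc 1 N := by
    ext m
    simp only [Finset.mem_Ioc, Finset.mem_Icc]
    omega
  rw [e]
  simpa [one_div] using this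

/-- majorant in the type II sum. -/
noncomputable def QQ (α : ℝ) (N T a b : ℕ) : ℝ :=
  ((N : ℝ) / a) ^ 2 * (if nd (α * a - α * b) < 1 / T then 1 else 0) + (N : ℝ) / a * T

lemma QQ_nonneg (α : ℝ) (N T a b : ℕ) : 0 ≤ QQ α N T a b := by
  unfold QQ
  split_ifs <;> positivity

lemma kern_aux (β : ℝ) (N T X a : ℕ) (hT : 0 < T) (hX : (X : ℝ) ≤ N / a) :
    ‖∑ m ∈ Finset.Ioc 0 X, (m : ℂ) * ee (β * m)‖ ≤
      ((N : ℝ) / a) ^ 2 * (if nd β < 1 / T then 1 else 0) + (N : ℝ) / a * T := by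
  have hT' : (0 : ℝ) < T := by exact_mod_cast hT
  split_ifs with h
  · have h1 : ‖∑ m ∈ Finset.Ioc 0 X, (m : ℂ) * ee (β * m)‖ ≤ (X : ℝ) ^ 2 := by
      calc _ ≤ ∑ m ∈ Finset.Ioc 0 X, (X : ℝ) := by
            refine norm_sum_le_of_le _ fun m hm => ?_
            rw [norm_mul, norm_ee, mul_one, Complex.norm_natCast]
            exact_mod_cast (Finset.mem_Ioc.1 hm).2
        _ = _ := by simp; ring
    have h2 : (X : ℝ) ^ 2 ≤ ((N : ℝ) / a) ^ 2 := by gcongr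
    have h3 : 0 ≤ (N : ℝ) / a * T := by positivity
    linarith
  · rw [not_lt] at h
    have hpos : 0 < nd β := lt_of_lt_of_le (by positivity) h
    rw [sum_Ioc_range _ _ (by simp)]
    have h2 := parts_bound β hpos (fun m => (m : ℝ)) (fun a b hab => by simpa using hab) (by simp) X
    simp only [Complex.ofReal_natCast] at h2
    refine h2.trans ?_
    rw [mul_zero, zero_add]
    calc (X : ℝ) / nd β ≤ (N / a) / (1 / T) := by gcongr
      _ = _ := by field_simp

lemma sum_QQ (c α : ℝ) (hc : 0 < c) (hα : Bad c α) (N T a : ℕ) (hT : 0 < T) (ha : 0 < a) :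
    ∑ b ∈ Finset.Ioc 0 a, QQ α N T a b ≤
      2 * (N : ℝ) ^ 2 / (c * T) * (1 / a) + 2 * (N : ℝ) ^ 2 * (1 / a) ^ 2 + N * T := by
  have ha' : (0 : ℝ) < a := by exact_mod_cast ha
  have hT' : (0 : ℝ) < T := by exact_mod_cast hT
  unfold QQ
  rw [Finset.sum_add_distrib, ← Finset.mul_sum, ← Finset.sum_filter]
  simp only [Finset.sum_const, nsmul_eq_mul, Nat.card_Ioc, mul_one, Nat.sub_zero]
  have := count_bound c α hc hα (α * a) (1 / T) a ha (by positivity)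
  calc _ ≤ ((N : ℝ) / a) ^ 2 * (2 * (1 / T * a / c) + 2) + a * (N / a * T) := by gcongr
    _ = _ := by field_simp


/-- inner sum in the type II estimate. -/
noncomputable def GG (α : ℝ) (g : ArithmeticFunction ℝ) (J : Finset ℕ) (N m : ℕ) : ℂ :=
  ∑ n ∈ J, if m * n ≤ N then (g n : ℂ) * ee (α * (m * n : ℕ)) else 0

lemma typeII_step1 (α : ℝ) (f g : ArithmeticFunction ℝ) (N U : ℕ) (hU : 0 < U)
    (hf0 : ∀ k ≤ U, f k = 0) (hg0 : ∀ k ≤ U, g k = 0) :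
    ∑ n ∈ Finset.Ioc 0 N, ((f * g) n : ℂ) * ee (α * n) =
      ∑ m ∈ Finset.Ioc 0 N, (f m : ℂ) * GG α g (Finset.Ioc U (N / U)) N m := by
  rw [twist_conv f g N (fun n => ee (α * n))]
  refine Finset.sum_congr rfl fun m hm => ?_
  rw [Finset.mem_Ioc] at hm
  by_cases hmU : m ≤ U
  · rw [hf0 m hmU]; simp
  · rw [not_le] at hmU
    unfold GG
    rw [Finset.mul_sum]
    symm
    calc _ = ∑ n ∈ Finset.Ioc U (N / U),
          (if m * n ≤ N then (f m : ℂ) * (g n : ℂ) * ee (α * (m * n : ℕ)) else 0) := by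
          refine Finset.sum_congr rfl fun n _ => ?_
          split_ifs
          · ring
          · simp
      _ = _ := by
          apply Finset.sum_subset
          · intro n hn
            rw [Finset.mem_Ioc] at hn ⊢
            exact ⟨by omega, hn.2.trans (Nat.div_le_self _ _)⟩
          · intro n hn hn2
            rw [Finset.mem_Ioc] at hn hn2
            by_cases hnU : n ≤ U
            · rw [hg0 n hnU]; simp
            · rw [not_le] at hnU
              rw [if_neg]
              have : N / U < n := by
                by_contra hcon
                exact hn2 ⟨hnU, not_lt.1 hcon⟩
              rw [Nat.div_lt_iff_lt_mul hU] at this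
              rw [not_le]
              nlinarith

lemma typeII_step2 (α : ℝ) (f g : ArithmeticFunction ℝ) (J : Finset ℕ) (N : ℕ)
    (hf : ∀ k, |f k| ≤ 1) :
    ‖∑ m ∈ Finset.Ioc 0 N, (f m : ℂ) * GG α g J N m‖ ^ 2 ≤
      (1 + Real.log N) * ∑ m ∈ Finset.Ioc 0 N, (m : ℝ) * ‖GG α g J N m‖ ^ 2 := by
  have h1 : ‖∑ m ∈ Finset.Ioc 0 N, (f m : ℂ) * GG α g J N m‖ ≤
      ∑ m ∈ Finset.Ioc 0 N, ‖GG α g J N m‖ := by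
    refine norm_sum_le_of_le _ fun m _ => ?_
    rw [norm_mul, Complex.norm_real, Real.norm_eq_abs]
    exact mul_le_of_le_one_left (norm_nonneg _) (hf m)
  have h2 : (∑ m ∈ Finset.Ioc 0 N, ‖GG α g J N m‖) ^ 2 ≤
      (∑ m ∈ Finset.Ioc 0 N, (1 : ℝ) / m) * ∑ m ∈ Finset.Ioc 0 N, (m : ℝ) * ‖GG α g J N m‖ ^ 2 := by
    apply Finset.sum_sq_le_sum_mul_sum_of_sq_le_mul
    · intro i _; positivity
    · intro i _; positivity
    · intro i hi
      have : (0 : ℝ) < i := by exact_mod_cast (Finset.mem_Ioc.1 hi).1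
      exact le_of_eq (by field_simp)
  calc _ ≤ (∑ m ∈ Finset.Ioc 0 N, ‖GG α g J N m‖) ^ 2 := by gcongr
    _ ≤ _ := h2
    _ ≤ _ := by
      gcongr
      exact sum_inv_le N

lemma typeII_step3 (α : ℝ) (g : ArithmeticFunction ℝ) (J : Finset ℕ) (hJ : ∀ a ∈ J, 0 < a) (N : ℕ) :
    ((∑ m ∈ Finset.Ioc 0 N, (m : ℝ) * ‖GG α g J N m‖ ^ 2 : ℝ) : ℂ) =
      ∑ a ∈ J, ∑ b ∈ J, (g a : ℂ) * (g b : ℂ) *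
        ∑ m ∈ Finset.Ioc 0 (N / max a b), (m : ℂ) * ee ((α * a - α * b) * m) := by
  push_cast
  simp_rw [← Complex.mul_conj']
  unfold GG
  simp_rw [map_sum, Finset.sum_mul_sum, Finset.mul_sum]
  rw [Finset.sum_comm]
  refine Finset.sum_congr rfl fun a ha => ?_
  rw [Finset.sum_comm]
  refine Finset.sum_congr rfl fun b hb => ?_
  have hmax : 0 < max a b := lt_max_of_lt_left (hJ a ha)
  rw [← sum_if_mul N (max a b) hmax]
  refine Finset.sum_congr rfl fun m hm => ?_
  have hiff : max a b * m ≤ N ↔ m * a ≤ N ∧ m * b ≤ N := by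
    rcases le_total a b with h | h
    · rw [max_eq_right h, mul_comm]
      have : m * a ≤ m * b := Nat.mul_le_mul_left _ h
      constructor
      · intro h; exact ⟨by omega, h⟩
      · exact fun h => h.2
    · rw [max_eq_left h, mul_comm]
      have : m * b ≤ m * a := Nat.mul_le_mul_left _ h
      constructor
      · intro h; exact ⟨h, by omega⟩
      · exact fun h => h.1
  by_cases h1 : m * a ≤ N
  · by_cases h2 : m * b ≤ N
    · rw [if_pos h1, if_pos h2, if_pos (hiff.2 ⟨h1, h2⟩), map_mul, Complex.conj_ofReal, conj_ee]
      have : (α * a - α * b) * m = α * (m * a : ℕ) + -(α * (m * b : ℕ)) := by push_cast; ring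
      rw [this, ee_add]
      ring
    · rw [if_neg h2, if_neg (fun h => h2 (hiff.1 h).2)]
      simp
  · rw [if_neg h1, if_neg (fun h => h1 (hiff.1 h).1)]
    simp

lemma typeII (c α : ℝ) (hc : 0 < c) (hα : Bad c α) (f g : ArithmeticFunction ℝ) (N T : ℕ)
    (hT : 0 < T) (hN : 0 < N) (hf : ∀ k, |f k| ≤ 1) (hf0 : ∀ k ≤ T ^ 2, f k = 0)
    (hg : ∀ k ≤ N, |g k| ≤ Real.log N) (hg0 : ∀ k ≤ T ^ 2, g k = 0) :
    ‖∑ n ∈ Finset.Ioc 0 N, ((f * g) n : ℂ) * ee (α * n)‖ ^ 2 ≤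
      (1 + Real.log N) ^ 4 * (N : ℝ) ^ 2 * (4 / c + 6) / T := by
  have hT' : (0 : ℝ) < T := by exact_mod_cast hT
  have hU : 0 < T ^ 2 := by positivity
  rw [typeII_step1 α f g N (T ^ 2) hU hf0 hg0]
  refine (typeII_step2 α f g _ N hf).trans ?_
  set J := Finset.Ioc (T ^ 2) (N / T ^ 2) with hJdef
  set L := Real.log N with hL
  have hL0 : 0 ≤ L := Real.log_natCast_nonneg N
  have hJpos : ∀ a ∈ J, 0 < a := by
    intro a ha
    rw [hJdef, Finset.mem_Ioc] at ha
    omega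
  have hJN : ∀ a ∈ J, a ≤ N := by
    intro a ha
    rw [hJdef, Finset.mem_Ioc] at ha
    exact ha.2.trans (Nat.div_le_self _ _)
  set S := ∑ m ∈ Finset.Ioc 0 N, (m : ℝ) * ‖GG α g J N m‖ ^ 2 with hS
  have hS0 : 0 ≤ S := Finset.sum_nonneg fun i _ => by positivity
  have hS1 : S = ‖(S : ℂ)‖ := by
    rw [Complex.norm_real, Real.norm_eq_abs, abs_of_nonneg hS0]
  -- kernel bound
  have hker : ∀ a ∈ J, ∀ b ∈ J, b ≤ a → ‖∑ m ∈ Finset.Ioc 0 (N / max a b),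
      (m : ℂ) * ee ((α * a - α * b) * m)‖ ≤ QQ α N T a b := by
    intro a ha b hb hab
    rw [max_eq_left hab]
    exact kern_aux _ N T _ a hT Nat.cast_div_le
  have hker2 : ∀ a ∈ J, ∀ b ∈ J, a ≤ b → ‖∑ m ∈ Finset.Ioc 0 (N / max a b),
      (m : ℂ) * ee ((α * a - α * b) * m)‖ ≤ QQ α N T b a := by
    intro a ha b hb hab
    rw [max_eq_right hab]
    have := kern_aux (α * a - α * b) N T (N / b) b hT Nat.cast_div_le
    rw [← nd_neg, neg_sub] at this
    exact this
  have hS2 : S ≤ L ^ 2 * (∑ a ∈ J, ∑ b ∈ J, ((if b ≤ a then QQ α N T a b else 0) +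
      (if a ≤ b then QQ α N T b a else 0))) := by
    rw [hS1, hS, typeII_step3 α g J hJpos N, Finset.mul_sum]
    refine norm_sum_le_of_le _ fun a ha => ?_
    rw [Finset.mul_sum]
    refine norm_sum_le_of_le _ fun b hb => ?_
    rw [norm_mul, norm_mul, Complex.norm_real, Complex.norm_real, Real.norm_eq_abs, Real.norm_eq_abs]
    have h1 := hg a (hJN a ha)
    have h2 := hg b (hJN b hb)
    have h3 : |g a| * |g b| ≤ L ^ 2 := by
      rw [sq]; gcongr
    apply mul_le_mul h3 _ (norm_nonneg _) (by positivity)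
    have q1 := QQ_nonneg α N T a b
    have q2 := QQ_nonneg α N T b a
    rcases le_total a b with h | h
    · have := hker2 a ha b hb h
      rw [if_pos h]
      split_ifs <;> linarith
    · have := hker a ha b hb h
      rw [if_pos h]
      split_ifs <;> linarith
  have hsum : ∀ a ∈ J, ∑ b ∈ J, (if b ≤ a then QQ α N T a b else 0) ≤
      2 * (N : ℝ) ^ 2 / (c * T) * (1 / a) + 2 * (N : ℝ) ^ 2 * (1 / a) ^ 2 + N * T := by
    intro a ha
    refine le_trans ?_ (sum_QQ c α hc hα N T a hT (hJpos a ha))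
    rw [← Finset.sum_filter]
    apply Finset.sum_le_sum_of_subset_of_nonneg
    · intro b hb
      rw [Finset.mem_filter] at hb
      rw [Finset.mem_Ioc]
      exact ⟨hJpos b hb.1, hb.2⟩
    · intro b _ _
      exact QQ_nonneg _ _ _ _ _
  have hinv : ∑ a ∈ J, (1 : ℝ) / a ≤ 1 + L := by
    refine le_trans ?_ (sum_inv_le N)
    apply Finset.sum_le_sum_of_subset_of_nonneg
    · intro a ha
      exact Finset.mem_Ioc.2 ⟨hJpos a ha, hJN a ha⟩
    · intro a _ _
      positivity
  have htot : ∑ a ∈ J, ∑ b ∈ J, (if b ≤ a then QQ α N T a b else 0) ≤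
      (N : ℝ) ^ 2 * (1 + L) / T * (2 / c + 3) := by
    calc _ ≤ ∑ a ∈ J, (2 * (N : ℝ) ^ 2 / (c * T) * (1 / a) +
            2 * (N : ℝ) ^ 2 * (1 / (T : ℝ) * (1 / a)) + N * T) := by
          refine Finset.sum_le_sum fun a ha => (hsum a ha).trans ?_
          gcongr
          rw [sq]
          have ha0 : (0 : ℝ) < a := by exact_mod_cast hJpos a ha
          gcongr
          have : T ^ 2 < a := (Finset.mem_Ioc.1 ha).1
          have h2 : T ≤ T ^ 2 := Nat.le_self_pow (by norm_num) T
          exact_mod_cast (by omega : T ≤ a)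
      _ = 2 * (N : ℝ) ^ 2 / (c * T) * (∑ a ∈ J, (1 : ℝ) / a) +
            2 * (N : ℝ) ^ 2 * (1 / (T : ℝ) * ∑ a ∈ J, (1 : ℝ) / a) + J.card * (N * T) := by
          rw [Finset.sum_add_distrib, Finset.sum_add_distrib, Finset.sum_const, nsmul_eq_mul,
            Finset.mul_sum, Finset.mul_sum, Finset.mul_sum]
      _ ≤ 2 * (N : ℝ) ^ 2 / (c * T) * (1 + L) +
            2 * (N : ℝ) ^ 2 * (1 / (T : ℝ) * (1 + L)) + (N / (T : ℝ) ^ 2) * (N * T) := by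
          gcongr
          calc (J.card : ℝ) ≤ ((N / T ^ 2 : ℕ) : ℝ) := by
                rw [hJdef, Nat.card_Ioc]
                exact_mod_cast Nat.sub_le _ _
            _ ≤ (N : ℝ) / ((T ^ 2 : ℕ) : ℝ) := Nat.cast_div_le
            _ = _ := by push_cast; rfl
      _ = (N : ℝ) ^ 2 / T * ((2 / c + 2) * (1 + L) + 1) := by field_simp
      _ ≤ (N : ℝ) ^ 2 / T * ((2 / c + 2) * (1 + L) + (1 + L)) := by
          gcongr
          linarith
      _ = _ := by ring
  have hfin : ∑ a ∈ J, ∑ b ∈ J, ((if b ≤ a then QQ α N T a b else 0) +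
      (if a ≤ b then QQ α N T b a else 0)) ≤ 2 * ((N : ℝ) ^ 2 * (1 + L) / T * (2 / c + 3)) := by
    simp_rw [Finset.sum_add_distrib]
    have hsw : ∑ a ∈ J, ∑ b ∈ J, (if a ≤ b then QQ α N T b a else 0) =
        ∑ a ∈ J, ∑ b ∈ J, (if b ≤ a then QQ α N T a b else 0) := Finset.sum_comm
    rw [hsw]
    linarith
  calc (1 + L) * S ≤ (1 + L) * (L ^ 2 * (2 * ((N : ℝ) ^ 2 * (1 + L) / T * (2 / c + 3)))) := by
        gcongr
        exact hS2.trans (by gcongr)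
    _ ≤ (1 + L) * ((1 + L) ^ 2 * (2 * ((N : ℝ) ^ 2 * (1 + L) / T * (2 / c + 3)))) := by
        gcongr
        linarith
    _ = _ := by ring


open ArithmeticFunction in
/-- truncation to `k ≤ U`. -/
noncomputable def loA (U : ℕ) (f : ArithmeticFunction ℝ) : ArithmeticFunction ℝ :=
  ⟨fun k => if k ≤ U then f k else 0, by simp⟩

/-- truncation to `k > U`. -/
noncomputable def hiA (U : ℕ) (f : ArithmeticFunction ℝ) : ArithmeticFunction ℝ :=
  ⟨fun k => if k ≤ U then 0 else f k, by simp⟩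

lemma loA_apply (U : ℕ) (f : ArithmeticFunction ℝ) (k : ℕ) :
    loA U f k = if k ≤ U then f k else 0 := rfl

lemma hiA_apply (U : ℕ) (f : ArithmeticFunction ℝ) (k : ℕ) :
    hiA U f k = if k ≤ U then 0 else f k := rfl

lemma lo_add_hi (U : ℕ) (f : ArithmeticFunction ℝ) : loA U f + hiA U f = f := by
  ext k
  rw [ArithmeticFunction.add_apply, loA_apply, hiA_apply]
  split_ifs <;> simp

open ArithmeticFunction in
lemma vaughan (U : ℕ) :
    vonMangoldt = loA U vonMangoldt + loA U (moebius : ArithmeticFunction ℝ) * log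
      - (loA U (moebius : ArithmeticFunction ℝ) * loA U vonMangoldt) * (zeta : ArithmeticFunction ℝ)
      + hiA U (moebius : ArithmeticFunction ℝ) *
        (hiA U vonMangoldt * (zeta : ArithmeticFunction ℝ)) := by
  have h1 := lo_add_hi U (moebius : ArithmeticFunction ℝ)
  have h2 := lo_add_hi U vonMangoldt
  have h3 : (moebius : ArithmeticFunction ℝ) * (zeta : ArithmeticFunction ℝ) = 1 :=
    coe_moebius_mul_coe_zeta
  have h4 := vonMangoldt_mul_zeta
  have h5 := moebius_mul_log_eq_vonMangoldt
  set m := (moebius : ArithmeticFunction ℝ)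
  set z := (zeta : ArithmeticFunction ℝ)
  set lm := loA U m
  set hm := hiA U m
  set lL := loA U vonMangoldt
  set hL := hiA U vonMangoldt
  have e1 : hm = m - lm := by rw [← h1]; ring
  have e2 : hL = vonMangoldt - lL := by rw [← h2]; ring
  rw [e1, e2]
  have : (m - lm) * ((vonMangoldt - lL) * z) = m * (vonMangoldt * z) - lm * (vonMangoldt * z)
      - m * z * lL + lm * lL * z := by ring
  rw [this, h4, h3, h5]
  ring

lemma abs_moebius_le (k : ℕ) :
    |((ArithmeticFunction.moebius : ArithmeticFunction ℝ)) k| ≤ 1 := by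
  rw [ArithmeticFunction.intCoe_apply]
  exact_mod_cast ArithmeticFunction.abs_moebius_le_one

lemma abs_lo_le (U : ℕ) (f : ArithmeticFunction ℝ) (k : ℕ) : |loA U f k| ≤ |f k| := by
  rw [loA_apply]; split_ifs <;> simp

lemma abs_hi_le (U : ℕ) (f : ArithmeticFunction ℝ) (k : ℕ) : |hiA U f k| ≤ |f k| := by
  rw [hiA_apply]; split_ifs <;> simp

lemma abs_conv_le (f g : ArithmeticFunction ℝ) (h1 : ∀ k, |f k| ≤ 1)
    (h2 : ∀ k, |g k| ≤ ArithmeticFunction.vonMangoldt k) (k : ℕ) : |(f * g) k| ≤ Real.log k := by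
  rw [← ArithmeticFunction.log_apply, ← ArithmeticFunction.zeta_mul_vonMangoldt,
    ArithmeticFunction.mul_apply, ArithmeticFunction.mul_apply]
  refine (Finset.abs_sum_le_sum_abs _ _).trans (Finset.sum_le_sum fun x hx => ?_)
  rw [abs_mul]
  have hx1 : x.1 ≠ 0 := by
    have := Nat.mem_divisorsAntidiagonal.1 hx
    intro h
    rw [h, zero_mul] at this
    exact this.2 this.1.symm
  rw [ArithmeticFunction.natCoe_apply, ArithmeticFunction.zeta_apply_ne hx1, Nat.cast_one]
  exact mul_le_mul (h1 _) (h2 _) (abs_nonneg _) zero_le_one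

lemma log_mono_nat : Monotone (ArithmeticFunction.log : ℕ → ℝ) := by
  intro a b hab
  simp only [ArithmeticFunction.log_apply]
  rcases Nat.eq_zero_or_pos a with rfl | ha
  · simpa using Real.log_natCast_nonneg b
  · exact Real.log_le_log (by exact_mod_cast ha) (by exact_mod_cast hab)

lemma log_nat_le {k N : ℕ} (h : k ≤ N) : Real.log k ≤ Real.log N := by
  have := log_mono_nat h
  simpa only [ArithmeticFunction.log_apply] using this

lemma abs_vM (k : ℕ) : |ArithmeticFunction.vonMangoldt k| = ArithmeticFunction.vonMangoldt k :=
  abs_of_nonneg ArithmeticFunction.vonMangoldt_nonneg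

lemma abs_zeta_le (k : ℕ) : |(ArithmeticFunction.zeta : ArithmeticFunction ℝ) k| ≤ 1 := by
  rw [ArithmeticFunction.natCoe_apply, ArithmeticFunction.zeta_apply]
  split_ifs <;> simp

lemma zeta_mono : Monotone ((ArithmeticFunction.zeta : ArithmeticFunction ℝ) : ℕ → ℝ) := by
  intro a b hab
  simp only [ArithmeticFunction.natCoe_apply, ArithmeticFunction.zeta_apply]
  split_ifs <;> first | omega | simp

open ArithmeticFunction in
lemma S_bound (c α : ℝ) (hc : 0 < c) (hα : Bad c α) (N T : ℕ) (hT : 0 < T) (hN : 0 < N) :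
    ‖∑ n ∈ Finset.Ioc 0 N, (vonMangoldt n : ℂ) * ee (α * n)‖ ≤
      (T : ℝ) ^ 2 * Real.log N + (T : ℝ) ^ 4 * Real.log N / c + (T : ℝ) ^ 8 * Real.log N / c +
        (1 + Real.log N) ^ 2 * N * √((4 / c + 6) / T) := by
  have hL0 : 0 ≤ Real.log N := Real.log_natCast_nonneg N
  set U := T ^ 2 with hU
  have hv := vaughan U
  set f2 := loA U (moebius : ArithmeticFunction ℝ) with hf2
  set f3 := f2 * loA U vonMangoldt with hf3
  set f4 := hiA U (moebius : ArithmeticFunction ℝ) with hf4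
  set g4 := hiA U vonMangoldt * (zeta : ArithmeticFunction ℝ) with hg4
  have hsplit : ∑ n ∈ Finset.Ioc 0 N, (vonMangoldt n : ℂ) * ee (α * n) =
      ∑ n ∈ Finset.Ioc 0 N, (loA U vonMangoldt n : ℂ) * ee (α * n) +
      ∑ n ∈ Finset.Ioc 0 N, ((f2 * log) n : ℂ) * ee (α * n) -
      ∑ n ∈ Finset.Ioc 0 N, ((f3 * (zeta : ArithmeticFunction ℝ)) n : ℂ) * ee (α * n) +
      ∑ n ∈ Finset.Ioc 0 N, ((f4 * g4) n : ℂ) * ee (α * n) := by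
    rw [← Finset.sum_add_distrib, ← Finset.sum_sub_distrib, ← Finset.sum_add_distrib]
    refine Finset.sum_congr rfl fun n _ => ?_
    have : vonMangoldt n = loA U vonMangoldt n + (f2 * log) n
      - (f3 * (zeta : ArithmeticFunction ℝ)) n + (f4 * g4) n := by
      conv_lhs => rw [hv]
      simp only [ArithmeticFunction.add_apply, sub_eq_add_neg, ArithmeticFunction.neg_apply]
    rw [this]
    push_cast
    ring
  have b1 : ‖∑ n ∈ Finset.Ioc 0 N, (loA U vonMangoldt n : ℂ) * ee (α * n)‖ ≤
      (T : ℝ) ^ 2 * Real.log N := by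
    calc _ ≤ ∑ n ∈ Finset.Ioc 0 N, (if n ≤ U then Real.log N else 0) := by
          refine norm_sum_le_of_le _ fun n hn => ?_
          rw [norm_mul, norm_ee, mul_one, Complex.norm_real, Real.norm_eq_abs, loA_apply]
          split_ifs
          · rw [abs_vM]
            exact vonMangoldt_le_log.trans (log_nat_le (Finset.mem_Ioc.1 hn).2)
          · simp
      _ = ((Finset.Ioc 0 N).filter (fun n => n ≤ U)).card * Real.log N := by
          rw [← Finset.sum_filter, Finset.sum_const, nsmul_eq_mul]
      _ ≤ (U : ℝ) * Real.log N := by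
          gcongr
          calc _ ≤ (Finset.Ioc 0 U).card := by
                apply Finset.card_le_card
                intro d
                simp only [Finset.mem_filter, Finset.mem_Ioc]
                omega
            _ = U := by simp
      _ = _ := by rw [hU]; push_cast; rfl
  have b2 : ‖∑ n ∈ Finset.Ioc 0 N, ((f2 * log) n : ℂ) * ee (α * n)‖ ≤
      (T : ℝ) ^ 4 * Real.log N / c := by
    have := typeI c α hc hα f2 log N U 1 (Real.log N) zero_le_one hL0
      (fun k _ => (abs_lo_le _ _ _).trans (abs_moebius_le k))
      (fun k hk => by rw [hf2, loA_apply, if_neg (by omega)]) log_mono_nat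
      (fun m hm => by rw [log_apply]; exact log_nat_le hm)
    refine this.trans (le_of_eq ?_)
    rw [hU]; push_cast; ring
  have b3 : ‖∑ n ∈ Finset.Ioc 0 N, ((f3 * (zeta : ArithmeticFunction ℝ)) n : ℂ) * ee (α * n)‖ ≤
      (T : ℝ) ^ 8 * Real.log N / c := by
    have := typeI c α hc hα f3 (zeta : ArithmeticFunction ℝ) N (U ^ 2) (Real.log N) 1 hL0 zero_le_one
      (fun k hk => (abs_conv_le _ _ (fun k => (abs_lo_le _ _ _).trans (abs_moebius_le k))
        (fun k => (abs_lo_le _ _ _).trans (abs_vM k).le) k).trans (log_nat_le hk))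
      (fun k hk => by
        rw [hf3, mul_apply]
        refine Finset.sum_eq_zero fun x hx => ?_
        have hx := Nat.mem_divisorsAntidiagonal.1 hx
        rw [hf2, loA_apply, loA_apply]
        by_cases h1 : x.1 ≤ U
        · by_cases h2 : x.2 ≤ U
          · exfalso
            have := Nat.mul_le_mul h1 h2
            rw [hx.1, ← sq] at this
            omega
          · rw [if_neg h2, mul_zero]
        · rw [if_neg h1, zero_mul])
      zeta_mono (fun m _ => (le_abs_self _).trans (abs_zeta_le m))
    refine this.trans (le_of_eq ?_)
    rw [hU]; push_cast; ring
  have b4 : ‖∑ n ∈ Finset.Ioc 0 N, ((f4 * g4) n : ℂ) * ee (α * n)‖ ≤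
      (1 + Real.log N) ^ 2 * N * √((4 / c + 6) / T) := by
    have := typeII c α hc hα f4 g4 N T hT hN
      (fun k => (abs_hi_le _ _ _).trans (abs_moebius_le k))
      (fun k hk => by rw [hf4, hiA_apply, if_pos hk])
      (fun k hk => by
        rw [hg4, mul_comm]
        exact (abs_conv_le _ _ abs_zeta_le
          (fun k => (abs_hi_le _ _ _).trans (abs_vM k).le) k).trans (log_nat_le hk))
      (fun k hk => by
        rw [hg4, mul_apply]
        refine Finset.sum_eq_zero fun x hx => ?_
        have hx := Nat.mem_divisorsAntidiagonal.1 hx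
        have hle : x.1 ≤ k := Nat.le_of_dvd (Nat.pos_of_ne_zero hx.2) ⟨x.2, hx.1.symm⟩
        rw [hiA_apply, if_pos (by omega), zero_mul])
    refine (pow_le_pow_iff_left₀ (norm_nonneg _) (by positivity) two_ne_zero).1 ?_
    refine this.trans (le_of_eq ?_)
    rw [mul_pow, Real.sq_sqrt (by positivity)]
    ring
  rw [hsplit]
  refine (norm_add_le _ _).trans (add_le_add ((norm_sub_le _ _).trans (add_le_add
    ((norm_add_le _ _).trans (add_le_add b1 b2)) b3)) b4)


lemma tendsto_log_mul_rpow (s : ℝ) (hs : 0 < s) :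
    Tendsto (fun N : ℕ => Real.log N * (N : ℝ) ^ (-s)) atTop (nhds 0) := by
  have h := (isLittleO_log_rpow_atTop hs).tendsto_div_nhds_zero.comp (tendsto_natCast_atTop_atTop (R := ℝ))
  refine h.congr fun N => ?_
  simp only [Function.comp]
  rw [Real.rpow_neg (Nat.cast_nonneg N), div_eq_mul_inv]

lemma tendsto_nat_rpow_neg (s : ℝ) (hs : 0 < s) :
    Tendsto (fun N : ℕ => (N : ℝ) ^ (-s)) atTop (nhds 0) :=
  (tendsto_rpow_neg_atTop hs).comp tendsto_natCast_atTop_atTop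

lemma S_tendsto (c α : ℝ) (hc : 0 < c) (hα : Bad c α) :
    Tendsto (fun N : ℕ => ‖∑ n ∈ Finset.Ioc 0 N,
      (ArithmeticFunction.vonMangoldt n : ℂ) * ee (α * n)‖ / N) atTop (nhds 0) := by
  have hlim : Tendsto (fun N : ℕ => (1 + 2 / c) * (Real.log N * (N : ℝ) ^ (-(1 / 2 : ℝ))) +
      √((4 / c + 6) * 2) * ((N : ℝ) ^ (-(1 / 64 : ℝ)) + Real.log N * (N : ℝ) ^ (-(1 / 64 : ℝ))) ^ 2)
      atTop (nhds 0) := by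
    have h1 := (tendsto_log_mul_rpow (1 / 2) (by norm_num)).const_mul (1 + 2 / c)
    have h2 := (((tendsto_nat_rpow_neg (1 / 64) (by norm_num)).add
      (tendsto_log_mul_rpow (1 / 64) (by norm_num))).pow 2).const_mul (√((4 / c + 6) * 2))
    have := h1.add h2
    simpa using this
  refine squeeze_zero' (Eventually.of_forall fun N => by positivity) ?_ hlim
  filter_upwards [eventually_ge_atTop 1] with N hN
  have hN1 : (1 : ℝ) ≤ N := by exact_mod_cast hN
  have hN0 : (0 : ℝ) < N := by linarith
  set x : ℝ := (N : ℝ) ^ (1 / 64 : ℝ) with hx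
  have hx1 : 1 ≤ x := Real.one_le_rpow hN1 (by norm_num)
  have hx0 : 0 < x := by linarith
  have hxN : x ^ 64 = N := by
    rw [hx, ← Real.rpow_natCast, ← Real.rpow_mul hN0.le]; norm_num
  have e1 : (N : ℝ) ^ (-(1 / 2 : ℝ)) = (x ^ 32)⁻¹ := by
    rw [hx, ← Real.rpow_natCast, ← Real.rpow_mul hN0.le, Real.rpow_neg hN0.le]; norm_num
  have e2 : (N : ℝ) ^ (-(1 / 64 : ℝ)) = x⁻¹ := by
    rw [Real.rpow_neg hN0.le]
  set T := ⌊x ^ 4⌋₊ with hT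
  have hx4 : 1 ≤ x ^ 4 := one_le_pow₀ hx1
  have hTpos : 0 < T := Nat.floor_pos.2 hx4
  have hT1 : (1 : ℝ) ≤ T := by exact_mod_cast hTpos
  have hTle : (T : ℝ) ≤ x ^ 4 := Nat.floor_le (by positivity)
  have hTge : x ^ 4 / 2 ≤ T := by
    have := Nat.lt_floor_add_one (x ^ 4)
    rw [← hT] at this
    linarith
  have hL0 : 0 ≤ Real.log N := Real.log_natCast_nonneg N
  have hb := S_bound c α hc hα N T hTpos (by omega)
  rw [e1, e2]
  have t8 : (T : ℝ) ^ 8 ≤ x ^ 32 := by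
    calc (T : ℝ) ^ 8 ≤ (x ^ 4) ^ 8 := by gcongr
      _ = x ^ 32 := by ring
  have t2 : (T : ℝ) ^ 2 ≤ x ^ 32 := (pow_le_pow_right₀ hT1 (by norm_num)).trans t8
  have t4 : (T : ℝ) ^ 4 ≤ x ^ 32 := (pow_le_pow_right₀ hT1 (by norm_num)).trans t8
  have hsq : √((4 / c + 6) / T) ≤ √((4 / c + 6) * 2) * (x ^ 2)⁻¹ := by
    have : (4 / c + 6) / T ≤ ((4 / c + 6) * 2) * ((x ^ 2)⁻¹) ^ 2 := by
      calc (4 / c + 6) / T ≤ (4 / c + 6) / (x ^ 4 / 2) := by gcongr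
        _ = _ := by field_simp
    calc _ ≤ √(((4 / c + 6) * 2) * ((x ^ 2)⁻¹) ^ 2) := Real.sqrt_le_sqrt this
      _ = _ := by
        rw [Real.sqrt_mul (by positivity), Real.sqrt_sq (by positivity)]
  set L := Real.log N
  rw [div_le_iff₀ hN0]
  refine hb.trans ?_
  calc _ ≤ x ^ 32 * L + x ^ 32 * L / c + x ^ 32 * L / c +
        (1 + L) ^ 2 * N * (√((4 / c + 6) * 2) * (x ^ 2)⁻¹) := by gcongr
    _ = _ := by
      rw [← hxN]
      field_simp
      ring

lemma prime_sum_bound (α : ℝ) (N : ℕ) :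
    ‖∑ p ∈ (Finset.range (N + 1)).filter Nat.Prime, ee (α * p)‖ * Real.log N ≤
      ((Nat.primeCounting N : ℝ) * Real.log N - Chebyshev.theta N) +
      (Chebyshev.psi N - Chebyshev.theta N) +
      ‖∑ n ∈ Finset.Ioc 0 N, (ArithmeticFunction.vonMangoldt n : ℂ) * ee (α * n)‖ := by
  set P := (Finset.range (N + 1)).filter Nat.Prime with hP
  have hPI : P = (Finset.Ioc 0 N).filter Nat.Prime := by
    ext p
    simp only [hP, Finset.mem_filter, Finset.mem_range, Finset.mem_Ioc]
    constructor
    · rintro ⟨h1, h2⟩; exact ⟨⟨h2.pos, by omega⟩, h2⟩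
    · rintro ⟨h1, h2⟩; exact ⟨by omega, h2⟩
  have htheta : Chebyshev.theta N = ∑ p ∈ P, Real.log p := by
    rw [Chebyshev.theta, hPI, Nat.floor_natCast]
  have hpsi : Chebyshev.psi N = ∑ n ∈ Finset.Ioc 0 N, ArithmeticFunction.vonMangoldt n := by
    rw [Chebyshev.psi, Nat.floor_natCast]
  have hpi : (Nat.primeCounting N : ℝ) = ∑ p ∈ P, (1 : ℝ) := by
    rw [Finset.sum_const, nsmul_eq_mul, mul_one, Nat.primeCounting, Nat.primeCounting',
      Nat.count_eq_card_filter_range]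
  have hL0 : 0 ≤ Real.log N := Real.log_natCast_nonneg N
  have d1 : ‖(∑ p ∈ P, ee (α * p)) * (Real.log N : ℂ) - ∑ p ∈ P, (Real.log p : ℂ) * ee (α * p)‖ ≤
      (Nat.primeCounting N : ℝ) * Real.log N - Chebyshev.theta N := by
    rw [hpi, htheta, Finset.sum_mul, Finset.sum_mul, ← Finset.sum_sub_distrib,
      ← Finset.sum_sub_distrib]
    refine norm_sum_le_of_le _ fun p hp => ?_
    have hpN : p ≤ N := by
      have := Finset.mem_range.1 (Finset.mem_filter.1 hp).1
      omega
    have : ee (α * p) * (Real.log N : ℂ) - (Real.log p : ℂ) * ee (α * p) =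
      ((Real.log N - Real.log p : ℝ) : ℂ) * ee (α * p) := by push_cast; ring
    rw [this, norm_mul, norm_ee, Complex.norm_real, Real.norm_eq_abs, mul_one, one_mul,
      abs_of_nonneg (sub_nonneg.2 (log_nat_le hpN))]
  have hsub : P ⊆ Finset.Ioc 0 N := by rw [hPI]; exact Finset.filter_subset _ _
  have hlam : ∀ p ∈ P, ArithmeticFunction.vonMangoldt p = Real.log p := fun p hp =>
    ArithmeticFunction.vonMangoldt_apply_prime (Finset.mem_filter.1 hp).2
  have d2 : ‖∑ n ∈ Finset.Ioc 0 N, (ArithmeticFunction.vonMangoldt n : ℂ) * ee (α * n) -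
      ∑ p ∈ P, (Real.log p : ℂ) * ee (α * p)‖ ≤ Chebyshev.psi N - Chebyshev.theta N := by
    have s1 : ∑ p ∈ P, (Real.log p : ℂ) * ee (α * p) =
        ∑ p ∈ P, (ArithmeticFunction.vonMangoldt p : ℂ) * ee (α * p) :=
      Finset.sum_congr rfl fun p hp => by rw [hlam p hp]
    have s2 : ∑ p ∈ P, Real.log p = ∑ p ∈ P, ArithmeticFunction.vonMangoldt p :=
      Finset.sum_congr rfl fun p hp => by rw [hlam p hp]
    rw [s1, hpsi, htheta, s2, ← Finset.sum_sdiff hsub, ← Finset.sum_sdiff hsub, add_sub_cancel_right,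
      add_sub_cancel_right]
    refine norm_sum_le_of_le _ fun p hp => ?_
    rw [norm_mul, norm_ee, Complex.norm_real, Real.norm_eq_abs, mul_one, abs_vM]
  have e : ‖∑ p ∈ P, ee (α * p)‖ * Real.log N = ‖(∑ p ∈ P, ee (α * p)) * (Real.log N : ℂ)‖ := by
    rw [norm_mul, Complex.norm_real, Real.norm_eq_abs, abs_of_nonneg hL0]
  rw [e]
  set A := (∑ p ∈ P, ee (α * p)) * (Real.log N : ℂ)
  set B := ∑ p ∈ P, (Real.log p : ℂ) * ee (α * p)
  set S := ∑ n ∈ Finset.Ioc 0 N, (ArithmeticFunction.vonMangoldt n : ℂ) * ee (α * n)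
  have : A = (A - B) - (S - B) + S := by ring
  rw [this]
  refine (norm_add_le _ _).trans (add_le_add ((norm_sub_le _ _).trans (add_le_add d1 d2)) le_rfl)

lemma pi_log_lower : ∀ᶠ N : ℕ in atTop, (1 / 4 : ℝ) * N ≤ (Nat.primeCounting N : ℝ) * Real.log N := by
  have h := (tendsto_log_mul_rpow 1 (by norm_num)).eventually (gt_mem_nhds (show (0 : ℝ) < 1 / 8 by norm_num))
  filter_upwards [h, eventually_ge_atTop 8] with N h1 h2
  have hN8 : (8 : ℝ) ≤ N := by exact_mod_cast h2
  have hN0 : (0 : ℝ) < N := by linarith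
  have a1 := Chebyshev.psi_ge N
  have a2 := Chebyshev.psi_le_primeCounting_mul_log N
  have a3 : Real.log N < 1 / 8 * N := by
    rw [Real.rpow_neg_one, ← div_eq_mul_inv, div_lt_iff₀ hN0] at h1
    exact h1
  have a4 : Real.log (N + 1) ≤ Real.log N + 1 / N := by
    have : (N : ℝ) + 1 = N * (1 + 1 / N) := by field_simp
    rw [this, Real.log_mul hN0.ne' (by positivity)]
    have := Real.log_le_sub_one_of_pos (show (0 : ℝ) < 1 + 1 / N by positivity)
    linarith
  have a5 : 1 / (N : ℝ) ≤ 1 / 64 * N := by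
    rw [div_le_iff₀ hN0]; nlinarith
  have a6 := Real.log_two_gt_d9
  nlinarith

lemma prime_sum_tendsto (c α : ℝ) (hc : 0 < c) (hα : Bad c α) :
    Tendsto (fun N : ℕ => ‖∑ p ∈ (Finset.range (N + 1)).filter Nat.Prime, ee (α * p)‖ /
      (Nat.primeCounting N : ℝ)) atTop (nhds 0) := by
  have t1 : Tendsto (fun N : ℕ => ((Nat.primeCounting N : ℝ) * Real.log N - Chebyshev.theta N) / N)
      atTop (nhds 0) := by
    have hO := Chebyshev.primeCounting_sub_theta_div_log_isBigO.comp_tendsto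
      (tendsto_natCast_atTop_atTop (R := ℝ))
    obtain ⟨C, hC⟩ := hO.bound
    have hlog : Tendsto (fun N : ℕ => C * (Real.log N)⁻¹) atTop (nhds 0) := by
      have := ((tendsto_inv_atTop_zero.comp Real.tendsto_log_atTop).comp
        (tendsto_natCast_atTop_atTop (R := ℝ))).const_mul C
      simpa using this
    refine squeeze_zero_norm' ?_ hlog
    filter_upwards [hC, eventually_ge_atTop 2] with N h1 h2
    have hN0 : (0 : ℝ) < N := by exact_mod_cast (by omega : 0 < N)
    have hl : 0 < Real.log N := Real.log_pos (by exact_mod_cast (by omega : 1 < N))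
    simp only [Function.comp, Nat.floor_natCast] at h1
    have e : ((Nat.primeCounting N : ℝ) * Real.log N - Chebyshev.theta N) / N =
      ((Nat.primeCounting N : ℝ) - Chebyshev.theta N / Real.log N) * (Real.log N / N) := by
      field_simp
    rw [e, norm_mul, Real.norm_of_nonneg (show 0 ≤ Real.log N / N by positivity)]
    rw [Real.norm_of_nonneg (show 0 ≤ (N : ℝ) / Real.log N ^ 2 by positivity)] at h1
    calc _ ≤ C * (N / Real.log N ^ 2) * (Real.log N / N) := by gcongr
      _ = _ := by field_simp
  have t2 : Tendsto (fun N : ℕ => (Chebyshev.psi N - Chebyshev.theta N) / N) atTop (nhds 0) := by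
    obtain ⟨C, hC⟩ := Chebyshev.psi_sub_theta_le_mul_sqrt
    have hl : Tendsto (fun N : ℕ => C * (N : ℝ) ^ (-(1 / 2 : ℝ))) atTop (nhds 0) := by
      simpa using (tendsto_nat_rpow_neg (1 / 2) (by norm_num)).const_mul C
    refine squeeze_zero' (Eventually.of_forall fun N => ?_) ?_ hl
    · have := Chebyshev.theta_le_psi N
      exact div_nonneg (by linarith) (by positivity)
    · filter_upwards [eventually_ge_atTop 1] with N hN
      have hN0 : (0 : ℝ) < N := by exact_mod_cast hN
      rw [div_le_iff₀ hN0]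
      refine (hC N).trans (le_of_eq ?_)
      rw [mul_assoc, ← Real.rpow_add_one hN0.ne', Real.sqrt_eq_rpow]
      norm_num
  have t3 := S_tendsto c α hc hα
  have t := ((t1.add t2).add t3).const_mul 4
  simp only [add_zero, mul_zero] at t
  refine squeeze_zero' (Eventually.of_forall fun N => by positivity) ?_ t
  filter_upwards [pi_log_lower, eventually_ge_atTop 2] with N h1 h2
  have hN0 : (0 : ℝ) < N := by exact_mod_cast (by omega : 0 < N)
  have hl : 0 < Real.log N := Real.log_pos (by exact_mod_cast (by omega : 1 < N))
  have hpi : (0 : ℝ) < Nat.primeCounting N := by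
    by_contra hcon
    have : (Nat.primeCounting N : ℝ) * Real.log N ≤ 0 :=
      mul_nonpos_of_nonpos_of_nonneg (not_lt.1 hcon) hl.le
    linarith
  have hb := prime_sum_bound α N
  set W := ‖∑ p ∈ (Finset.range (N + 1)).filter Nat.Prime, ee (α * p)‖
  have hW : 0 ≤ W := norm_nonneg _
  rw [← add_div, ← add_div]
  calc W / (Nat.primeCounting N : ℝ) = (W * Real.log N) / ((Nat.primeCounting N : ℝ) * Real.log N) := by
        field_simp
    _ ≤ (W * Real.log N) / (1 / 4 * N) := by gcongr
    _ = 4 * ((W * Real.log N) / N) := by field_simp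
    _ ≤ _ := by gcongr


lemma quad_mul_int (η : ℝ) (hη : IsQuadraticIrrational η) (h : ℤ) (hh : h ≠ 0) :
    ∃ c : ℝ, 0 < c ∧ Bad c (h * η) := by
  obtain ⟨h1, A, B, C, hA, e⟩ := hη
  refine bad_of_quad (h * η) (h1.intCast_mul hh) A (B * h) (C * h ^ 2) hA ?_
  push_cast
  linear_combination (h : ℝ) ^ 2 * e

/-- primes up to `N`. -/
def PP (N : ℕ) : Finset ℕ := (Finset.range (N + 1)).filter Nat.Prime

lemma PP_card (N : ℕ) : (PP N).card = Nat.primeCounting N := by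
  rw [PP, Nat.primeCounting, Nat.primeCounting', Nat.count_eq_card_filter_range]

lemma PP_card_pos (N : ℕ) : 0 < (PP (N + 2)).card := by
  apply Finset.card_pos.2
  exact ⟨2, Finset.mem_filter.2 ⟨Finset.mem_range.2 (by omega), Nat.prime_two⟩⟩

/-- average over primes. -/
noncomputable def avg (η : ℝ) (N : ℕ) (f : C(AddCircle (1 : ℝ), ℂ)) : ℂ :=
  ((PP (N + 2)).card : ℂ)⁻¹ * ∑ p ∈ PP (N + 2), f ((η * p : ℝ) : AddCircle (1 : ℝ))

lemma avg_norm_le (η : ℝ) (N : ℕ) (f : C(AddCircle (1 : ℝ), ℂ)) : ‖avg η N f‖ ≤ ‖f‖ := by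
  unfold avg
  have h0 : (0 : ℝ) < (PP (N + 2)).card := by exact_mod_cast PP_card_pos N
  rw [norm_mul, norm_inv, Complex.norm_natCast]
  have : ‖∑ p ∈ PP (N + 2), f ((η * p : ℝ) : AddCircle (1 : ℝ))‖ ≤ (PP (N + 2)).card * ‖f‖ := by
    rw [← nsmul_eq_mul, ← Finset.sum_const]
    exact norm_sum_le_of_le _ fun p _ => f.norm_coe_le_norm _
  calc _ ≤ ((PP (N + 2)).card : ℝ)⁻¹ * ((PP (N + 2)).card * ‖f‖) := by gcongr
    _ = _ := by field_simp

lemma avg_add (η : ℝ) (N : ℕ) (f g : C(AddCircle (1 : ℝ), ℂ)) :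
    avg η N (f + g) = avg η N f + avg η N g := by
  unfold avg
  simp only [ContinuousMap.add_apply, Finset.sum_add_distrib, mul_add]

lemma avg_smul (η : ℝ) (N : ℕ) (a : ℂ) (f : C(AddCircle (1 : ℝ), ℂ)) :
    avg η N (a • f) = a * avg η N f := by
  unfold avg
  simp only [ContinuousMap.smul_apply, smul_eq_mul, ← Finset.mul_sum]
  ring

/-- the mean value of `f`. -/
noncomputable def mean (f : C(AddCircle (1 : ℝ), ℂ)) : ℂ :=
  ∫ x, f x ∂(AddCircle.haarAddCircle : MeasureTheory.Measure (AddCircle (1 : ℝ)))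

lemma cont_integrable (f : C(AddCircle (1 : ℝ), ℂ)) :
    MeasureTheory.Integrable f (AddCircle.haarAddCircle : MeasureTheory.Measure (AddCircle (1 : ℝ))) :=
  f.continuous.integrable_of_hasCompactSupport (HasCompactSupport.of_compactSpace _)

lemma mean_fourier (n : ℤ) (hn : n ≠ 0) : mean (fourier n) = 0 := by
  unfold mean
  have h := MeasureTheory.integral_add_right_eq_self
    (μ := (AddCircle.haarAddCircle : MeasureTheory.Measure (AddCircle (1 : ℝ))))
    (fun x => fourier n x) (((1 / 2 / n : ℝ)) : AddCircle (1 : ℝ))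
  have e : ∀ x : AddCircle (1 : ℝ), fourier n (x + ((1 / 2 / n : ℝ) : AddCircle (1 : ℝ))) =
      - fourier n x := by
    intro x
    exact fourier_add_half_inv_index hn one_pos x
  simp_rw [e] at h
  rw [MeasureTheory.integral_neg] at h
  exact self_eq_neg.1 h.symm

lemma avg_fourier (η : ℝ) (hη : IsQuadraticIrrational η) (n : ℤ) :
    Tendsto (fun N => avg η N (fourier n)) atTop (nhds (mean (fourier n))) := by
  by_cases hn : n = 0
  · subst hn
    have h1 : mean (fourier 0) = 1 := by
      unfold mean
      simp
    rw [h1]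
    refine tendsto_const_nhds.congr fun N => ?_
    have h0 : ((PP (N + 2)).card : ℂ) ≠ 0 := by exact_mod_cast (PP_card_pos N).ne'
    unfold avg
    simp [h0]
  · rw [mean_fourier n hn]
    obtain ⟨c, hc, hb⟩ := quad_mul_int η hη n hn
    have := (tendsto_add_atTop_iff_nat 2).2 (prime_sum_tendsto c _ hc hb)
    rw [tendsto_zero_iff_norm_tendsto_zero]
    refine this.congr fun N => ?_
    unfold avg
    rw [norm_mul, norm_inv, Complex.norm_natCast, PP_card, div_eq_inv_mul]
    congr 2
    refine Finset.sum_congr rfl fun p _ => ?_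
    rw [fourier_coe_apply]
    unfold ee
    congr 1
    push_cast
    ring

lemma avg_tendsto (η : ℝ) (hη : IsQuadraticIrrational η) (f : C(AddCircle (1 : ℝ), ℂ)) :
    Tendsto (fun N => avg η N f) atTop (nhds (mean f)) := by
  have hspan : ∀ g ∈ Submodule.span ℂ (Set.range (@fourier 1)),
      Tendsto (fun N => avg η N g) atTop (nhds (mean g)) := by
    intro g hg
    induction hg using Submodule.span_induction with
    | mem x hx =>
      obtain ⟨n, rfl⟩ := hx
      exact avg_fourier η hη n
    | zero =>
      have : mean 0 = 0 := by unfold mean; simp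
      rw [this]
      refine tendsto_const_nhds.congr fun N => ?_
      unfold avg
      simp
    | add x y _ _ hx hy =>
      have : mean (x + y) = mean x + mean y := by
        unfold mean
        exact MeasureTheory.integral_add (cont_integrable x) (cont_integrable y)
      rw [this]
      exact (hx.add hy).congr fun N => (avg_add η N x y).symm
    | smul a x _ hx =>
      have : mean (a • x) = a * mean x := by
        unfold mean
        exact MeasureTheory.integral_const_mul a _
      rw [this]
      exact (hx.const_mul a).congr fun N => (avg_smul η N a x).symm
  have hmem : f ∈ closure ((Submodule.span ℂ (Set.range (@fourier 1)) :
      Submodule ℂ C(AddCircle (1 : ℝ), ℂ)) : Set C(AddCircle (1 : ℝ), ℂ)) := by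
    rw [← Submodule.topologicalClosure_coe, span_fourier_closure_eq_top]
    trivial
  rw [Metric.tendsto_atTop]
  intro ε hε
  obtain ⟨g, hg, hfg⟩ := Metric.mem_closure_iff.1 hmem (ε / 3) (by positivity)
  obtain ⟨N0, hN0⟩ := Metric.tendsto_atTop.1 (hspan g hg) (ε / 3) (by positivity)
  refine ⟨N0, fun N hN => ?_⟩
  have h1 := hN0 N hN
  rw [dist_eq_norm] at hfg h1 ⊢
  have h2 : ‖avg η N (f - g)‖ < ε / 3 := (avg_norm_le _ _ _).trans_lt hfg
  have h3 : ‖mean (f - g)‖ < ε / 3 := by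
    refine lt_of_le_of_lt ?_ hfg
    have := MeasureTheory.norm_integral_le_of_norm_le_const
      (μ := (AddCircle.haarAddCircle : MeasureTheory.Measure (AddCircle (1 : ℝ))))
      (f := fun x => (f - g) x) (C := ‖f - g‖) (Eventually.of_forall fun x => (f - g).norm_coe_le_norm x)
    unfold mean
    simpa using this
  have e1 : avg η N f = avg η N (f - g) + avg η N g := by rw [← avg_add, sub_add_cancel]
  have e2 : mean f = mean (f - g) + mean g := by
    unfold mean
    rw [← MeasureTheory.integral_add (cont_integrable _) (cont_integrable _)]
    simp
  have : avg η N f - mean f = avg η N (f - g) - mean (f - g) + (avg η N g - mean g) := by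
    rw [e1, e2]; ring
  rw [this]
  calc _ ≤ ‖avg η N (f - g)‖ + ‖mean (f - g)‖ + ‖avg η N g - mean g‖ :=
        (norm_add_le _ _).trans (add_le_add (norm_sub_le _ _) le_rfl)
    _ < ε := by linarith

/-- empirical measure of the primes on the circle. -/
noncomputable def emp (η : ℝ) (N : ℕ) : MeasureTheory.Measure (AddCircle (1 : ℝ)) :=
  ((PP (N + 2)).card : ENNReal)⁻¹ •
    ∑ p ∈ PP (N + 2), MeasureTheory.Measure.dirac ((η * p : ℝ) : AddCircle (1 : ℝ))

instance emp_prob (η : ℝ) (N : ℕ) : MeasureTheory.IsProbabilityMeasure (emp η N) := by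
  constructor
  unfold emp
  have h0 : ((PP (N + 2)).card : ENNReal) ≠ 0 := by exact_mod_cast (PP_card_pos N).ne'
  simp [ENNReal.inv_mul_cancel h0 (ENNReal.natCast_ne_top _)]

/-- the empirical measure as a probability measure. -/
noncomputable def empP (η : ℝ) (N : ℕ) : MeasureTheory.ProbabilityMeasure (AddCircle (1 : ℝ)) :=
  ⟨emp η N, emp_prob η N⟩

/-- Haar measure as a probability measure. -/
noncomputable def haarP : MeasureTheory.ProbabilityMeasure (AddCircle (1 : ℝ)) :=
  ⟨AddCircle.haarAddCircle, inferInstance⟩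

lemma empP_coe (η : ℝ) (N : ℕ) :
    (empP η N : MeasureTheory.Measure (AddCircle (1 : ℝ))) = emp η N := rfl

lemma haarP_coe :
    (haarP : MeasureTheory.Measure (AddCircle (1 : ℝ))) = AddCircle.haarAddCircle := rfl

lemma emp_tendsto (η : ℝ) (hη : IsQuadraticIrrational η) :
    Tendsto (empP η) atTop (nhds haarP) := by
  rw [MeasureTheory.ProbabilityMeasure.tendsto_iff_forall_integral_tendsto]
  intro f
  let F : C(AddCircle (1 : ℝ), ℂ) := ⟨fun x => (f x : ℂ), by fun_prop⟩
  have h := avg_tendsto η hη F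
  have hm : mean F = ((∫ x, f x ∂(AddCircle.haarAddCircle :
      MeasureTheory.Measure (AddCircle (1 : ℝ))) : ℝ) : ℂ) := by
    unfold mean
    exact integral_ofReal
  rw [hm] at h
  have h2 := (Complex.continuous_re.tendsto _).comp h
  rw [Complex.ofReal_re] at h2
  refine h2.congr fun N => ?_
  have h3 : avg η N F = ((((PP (N + 2)).card : ℝ)⁻¹ *
      ∑ p ∈ PP (N + 2), f ((η * p : ℝ) : AddCircle (1 : ℝ)) : ℝ) : ℂ) := by
    unfold avg
    push_cast
    rfl
  simp only [Function.comp]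
  rw [h3, Complex.ofReal_re]
  simp only [empP_coe, haarP_coe]
  unfold emp
  rw [MeasureTheory.integral_smul_measure, MeasureTheory.integral_finsetSum_measure]
  · simp
  · intro p _
    exact MeasureTheory.integrable_dirac (by simp)

/-- the arc `(a,b)` in the circle. -/
def arc (a b : ℝ) : Set (AddCircle (1 : ℝ)) := (fun x : ℝ => (x : AddCircle (1 : ℝ))) '' Set.Ioo a b

lemma coe_eq_iff (x y : ℝ) : (x : AddCircle (1 : ℝ)) = y ↔ ∃ n : ℤ, (n : ℝ) = x - y := by
  rw [← sub_eq_zero, ← AddCircle.coe_sub, AddCircle.coe_eq_zero_iff]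
  simp

lemma mem_arc (a b : ℝ) (ha : 0 < a) (hb : b < 1) (x : ℝ) :
    (x : AddCircle (1 : ℝ)) ∈ arc a b ↔ a < Int.fract x ∧ Int.fract x < b := by
  constructor
  · rintro ⟨y, hy, h⟩
    obtain ⟨n, hn⟩ := (coe_eq_iff y x).1 h
    have : Int.fract x = y := by
      rw [Int.fract_eq_iff]
      exact ⟨by linarith [hy.1], by linarith [hy.2], -n, by push_cast; linarith⟩
    rw [this]
    exact hy
  · intro h
    refine ⟨Int.fract x, h, ?_⟩
    exact (coe_eq_iff _ _).2 ⟨-⌊x⌋, by rw [Int.fract]; push_cast; ring⟩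

lemma haar_eq : (AddCircle.haarAddCircle : MeasureTheory.Measure (AddCircle (1 : ℝ))) =
    MeasureTheory.volume := by
  rw [AddCircle.volume_eq_smul_haarAddCircle]
  simp

lemma arc_open (a b : ℝ) : IsOpen (arc a b) :=
  QuotientAddGroup.isOpenMap_coe _ isOpen_Ioo

lemma arc_volume (a b : ℝ) (ha : 0 < a) (hb : b < 1) :
    MeasureTheory.volume (arc a b) = ENNReal.ofReal (b - a) := by
  rw [AddCircle.add_projection_respects_measure (1 : ℝ) 0 (arc_open a b).measurableSet]
  have : (QuotientAddGroup.mk ⁻¹' arc a b ∩ Set.Ioc (0 : ℝ) (0 + 1)) = Set.Ioo a b := by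
    ext x
    have := mem_arc a b ha hb x
    constructor
    · rintro ⟨h1, h2⟩
      have h1 := this.1 h1
      rcases eq_or_lt_of_le h2.2 with h3 | h3
      · exfalso
        rw [h3] at h1
        norm_num at h1
        linarith
      · rw [Int.fract_eq_self.2 ⟨h2.1.le, by linarith⟩] at h1
        exact h1
    · intro h
      have hf : Int.fract x = x := Int.fract_eq_self.2 ⟨by linarith [h.1], by linarith [h.2]⟩
      refine ⟨this.2 (by rw [hf]; exact h), by linarith [h.1], by linarith [h.2]⟩
  rw [this, Real.volume_Ioo]

lemma arc_frontier (a b : ℝ) : MeasureTheory.volume (frontier (arc a b)) = 0 := by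
  have hsub : frontier (arc a b) ⊆ {(a : AddCircle (1 : ℝ)), (b : AddCircle (1 : ℝ))} := by
    rw [(arc_open a b).frontier_eq]
    rintro x ⟨h1, h2⟩
    have hcl : IsClosed ((fun x : ℝ => (x : AddCircle (1 : ℝ))) '' Set.Icc a b) :=
      (isCompact_Icc.image (AddCircle.continuous_mk' 1)).isClosed
    have h3 := closure_minimal (Set.image_mono Set.Ioo_subset_Icc_self) hcl h1
    obtain ⟨y, hy, rfl⟩ := h3
    rcases eq_or_lt_of_le hy.1 with h | h
    · left; rw [h]
    · rcases eq_or_lt_of_le hy.2 with h' | h'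
      · right; simp [h']
      · exact absurd ⟨y, ⟨h, h'⟩, rfl⟩ h2
  have hpt : ∀ x : AddCircle (1 : ℝ), MeasureTheory.volume ({x} : Set (AddCircle (1 : ℝ))) = 0 := by
    intro x
    have := AddCircle.volume_closedBall (T := 1) (x := x) 0
    simpa using this
  refine MeasureTheory.measure_mono_null hsub ?_
  rw [Set.insert_eq]
  exact MeasureTheory.measure_union_null (hpt _) (hpt _)

lemma emp_apply (η a b : ℝ) (ha : 0 < a) (hb : b < 1) (N : ℕ) :
    (emp η N (arc a b)).toReal = (((Finset.range (N + 2 + 1)).filter fun p =>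
          Nat.Prime p ∧ a < Int.fract (η * p) ∧ Int.fract (η * p) < b).card : ℝ)
        / (Nat.primeCounting (N + 2) : ℝ) := by
  unfold emp
  rw [MeasureTheory.Measure.smul_apply, MeasureTheory.Measure.finsetSum_apply]
  simp only [MeasureTheory.Measure.dirac_apply' _ (arc_open a b).measurableSet, smul_eq_mul]
  rw [ENNReal.toReal_mul, ENNReal.toReal_inv, ENNReal.toReal_natCast, PP_card, div_eq_inv_mul]
  congr 1
  have : ∀ p : ℕ, (arc a b).indicator (1 : AddCircle (1 : ℝ) → ENNReal) ((η * p : ℝ) : AddCircle (1 : ℝ))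
      = if a < Int.fract (η * p) ∧ Int.fract (η * p) < b then 1 else 0 := by
    intro p
    classical
    rw [Set.indicator_apply]
    simp only [mem_arc a b ha hb, Pi.one_apply]
  simp_rw [this]
  rw [PP, ← Finset.sum_filter, Finset.filter_filter, Finset.sum_const, nsmul_eq_mul, mul_one,
    ENNReal.toReal_natCast]

theorem density_of_special_primes (η : ℝ) (hη : IsQuadraticIrrational η)
    (a b : ℝ) (ha : 0 < a) (hab : a < b) (hb : b < 1) :
    Tendsto (fun N : ℕ =>
      (((Finset.range (N + 1)).filter fun p =>
          Nat.Prime p ∧ a < Int.fract (η * p) ∧ Int.fract (η * p) < b).card : ℝ)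
        / (Nat.primeCounting N : ℝ)) atTop (nhds (b - a)) := by
  rw [← tendsto_add_atTop_iff_nat 2]
  have h := MeasureTheory.ProbabilityMeasure.tendsto_measure_of_null_frontier_of_tendsto'
    (emp_tendsto η hη) (E := arc a b) (by
      simp only [empP_coe, haarP_coe]
      rw [haar_eq]
      exact arc_frontier a b)
  simp only [empP_coe, haarP_coe] at h
  rw [haar_eq, arc_volume a b ha hb] at h
  have h2 := (ENNReal.tendsto_toReal ENNReal.ofReal_ne_top).comp h
  rw [ENNReal.toReal_ofReal (by linarith)] at h2
  exact h2.congr fun N => emp_apply η a b ha hb N
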